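/- In an entwined comonad-monad structure on a category C, if both (□εχδ): χ_{□A} ∘ ◇δ^{□□}_A ∘ ε^□_{◇□A} = id_{□◇□A} and (◇εχδ): ε^◇_{□◇A} ∘ □δ^{◇◇}_A ∘ χ_{◇A} = id_{◇□◇A} hold for all objects A, then the equation (□◇): ◇□ε^◇_A ∘ ε^□_{◇□A} = ε^◇_{□◇A} ∘ □◇ε^□_A holds for all objects A. -/

import Mathlib

open CategoryTheory

universe v u

/-- An entwined comonad-monad structure on a category `C`: a comonad
`(□, ε^□, δ^{□□})`, a monad `(◇, ε^◇, δ^{◇◇})`, and a natural transformation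
`χ : ◇□ ⟶ □◇` satisfying the mixed distributive (entwining) laws.
(Composition `g ∘ f` of the paper is `f ≫ g` here.) -/
structure Entwined (C : Type u) [Category.{v} C] where
  /-- the endofunctor `□` -/
  box : C ⥤ C
  /-- the endofunctor `◇` -/
  dia : C ⥤ C
  /-- `ε^□ : □ ⟶ Id` -/
  εbox : box ⟶ 𝟭 C
  /-- `δ^{□□} : □ ⟶ □□` -/
  δbb : box ⟶ box ⋙ box
  /-- `ε^◇ : Id ⟶ ◇` -/
  εdia : 𝟭 C ⟶ dia
  /-- `δ^{◇◇} : ◇◇ ⟶ ◇` -/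
  δdd : dia ⋙ dia ⟶ dia
  /-- the entwining `χ : ◇□ ⟶ □◇` -/
  χ : box ⋙ dia ⟶ dia ⋙ box
  /-- `ε^□_{□A} ∘ δ^{□□}_A = id` -/
  box_counit_right : ∀ A : C, δbb.app A ≫ εbox.app (box.obj A) = 𝟙 (box.obj A)
  /-- `□ε^□_A ∘ δ^{□□}_A = id` -/
  box_counit_left : ∀ A : C, δbb.app A ≫ box.map (εbox.app A) = 𝟙 (box.obj A)
  /-- `□δ^{□□}_A ∘ δ^{□□}_A = δ^{□□}_{□A} ∘ δ^{□□}_A` -/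
  box_coassoc : ∀ A : C, δbb.app A ≫ box.map (δbb.app A) = δbb.app A ≫ δbb.app (box.obj A)
  /-- `δ^{◇◇}_A ∘ ε^◇_{◇A} = id` -/
  dia_unit_right : ∀ A : C, εdia.app (dia.obj A) ≫ δdd.app A = 𝟙 (dia.obj A)
  /-- `δ^{◇◇}_A ∘ ◇ε^◇_A = id` -/
  dia_unit_left : ∀ A : C, dia.map (εdia.app A) ≫ δdd.app A = 𝟙 (dia.obj A)
  /-- `δ^{◇◇}_A ∘ ◇δ^{◇◇}_A = δ^{◇◇}_A ∘ δ^{◇◇}_{◇A}` -/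
  dia_assoc : ∀ A : C, dia.map (δdd.app A) ≫ δdd.app A = δdd.app (dia.obj A) ≫ δdd.app A
  /-- `(ε^□χ)`: `ε^□_{◇A} ∘ χ_A = ◇ε^□_A` -/
  εbox_χ : ∀ A : C, χ.app A ≫ εbox.app (dia.obj A) = dia.map (εbox.app A)
  /-- `(ε^◇χ)`: `χ_A ∘ ε^◇_{□A} = □ε^◇_A` -/
  εdia_χ : ∀ A : C, εdia.app (box.obj A) ≫ χ.app A = box.map (εdia.app A)
  /-- `(δ^{□□}χ)`: `δ^{□□}_{◇A} ∘ χ_A = □χ_A ∘ χ_{□A} ∘ ◇δ^{□□}_A` -/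
  δbb_χ : ∀ A : C, χ.app A ≫ δbb.app (dia.obj A) =
      dia.map (δbb.app A) ≫ χ.app (box.obj A) ≫ box.map (χ.app A)
  /-- `(δ^{◇◇}χ)`: `χ_A ∘ δ^{◇◇}_{□A} = □δ^{◇◇}_A ∘ χ_{◇A} ∘ ◇χ_A` -/
  δdd_χ : ∀ A : C, δdd.app (box.obj A) ≫ χ.app A =
      dia.map (χ.app A) ≫ χ.app (dia.obj A) ≫ box.map (δdd.app A)

/-- If both `(□εχδ)`: `χ_{□A} ∘ ◇δ^{□□}_A ∘ ε^□_{◇□A} = id_{□◇□A}` and `(◇εχδ)`: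
`ε^◇_{□◇A} ∘ □δ^{◇◇}_A ∘ χ_{◇A} = id_{◇□◇A}` hold for all `A`, then `(□◇)`:
`◇□ε^◇_A ∘ ε^□_{◇□A} = ε^◇_{□◇A} ∘ □◇ε^□_A` holds for all `A`. -/
theorem Entwined.boxdia_of_chi_delta_eqs {C : Type u} [Category.{v} C] (E : Entwined C)
    (h1 : ∀ A : C,
      E.εbox.app (E.dia.obj (E.box.obj A)) ≫ E.dia.map (E.δbb.app A) ≫
        E.χ.app (E.box.obj A) = 𝟙 (E.box.obj (E.dia.obj (E.box.obj A))))
    (h2 : ∀ A : C,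
      E.χ.app (E.dia.obj A) ≫ E.box.map (E.δdd.app A) ≫
        E.εdia.app (E.box.obj (E.dia.obj A)) = 𝟙 (E.dia.obj (E.box.obj (E.dia.obj A)))) :
    ∀ A : C,
      E.εbox.app (E.dia.obj (E.box.obj A)) ≫ E.dia.map (E.box.map (E.εdia.app A)) =
        E.box.map (E.dia.map (E.εbox.app A)) ≫ E.εdia.app (E.box.obj (E.dia.obj A)) := by
  intro A
  have n1 : E.dia.map (E.box.map (E.εdia.app A)) ≫ E.χ.app (E.dia.obj A) =
      E.χ.app A ≫ E.box.map (E.dia.map (E.εdia.app A)) := E.χ.naturality (E.εdia.app A)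
  have n2 : E.dia.map (E.box.map (E.εbox.app A)) ≫ E.χ.app A =
      E.χ.app (E.box.obj A) ≫ E.box.map (E.dia.map (E.εbox.app A)) :=
    E.χ.naturality (E.εbox.app A)
  -- `◇□ε^◇_A = ε^◇_{□◇A} ∘ χ_A`, from `(◇εχδ)`
  have k1 : E.dia.map (E.box.map (E.εdia.app A)) =
      E.χ.app A ≫ E.εdia.app (E.box.obj (E.dia.obj A)) := by
    have e : E.box.map (E.dia.map (E.εdia.app A)) ≫ E.box.map (E.δdd.app A) =
        𝟙 (E.box.obj (E.dia.obj A)) := by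
      rw [← E.box.map_id, ← E.dia_unit_left A, E.box.map_comp]
    calc E.dia.map (E.box.map (E.εdia.app A))
        = E.dia.map (E.box.map (E.εdia.app A)) ≫ 𝟙 (E.dia.obj (E.box.obj (E.dia.obj A))) :=
          (Category.comp_id _).symm
      _ = (E.dia.map (E.box.map (E.εdia.app A)) ≫ E.χ.app (E.dia.obj A)) ≫
            E.box.map (E.δdd.app A) ≫ E.εdia.app (E.box.obj (E.dia.obj A)) := by
          rw [← h2 A, Category.assoc]
      _ = E.χ.app A ≫ (E.box.map (E.dia.map (E.εdia.app A)) ≫ E.box.map (E.δdd.app A)) ≫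
            E.εdia.app (E.box.obj (E.dia.obj A)) := by
          rw [n1]; exact (by simp only [Category.assoc])
      _ = _ := by rw [e]; exact congrArg _ (Category.id_comp _)
  -- `□◇ε^□_A = χ_A ∘ ε^□_{◇□A}`, from `(□εχδ)`
  have k2 : E.box.map (E.dia.map (E.εbox.app A)) =
      E.εbox.app (E.dia.obj (E.box.obj A)) ≫ E.χ.app A := by
    have e : E.dia.map (E.δbb.app A) ≫ E.dia.map (E.box.map (E.εbox.app A)) =
        𝟙 (E.dia.obj (E.box.obj A)) := by
      rw [← E.dia.map_id, ← E.box_counit_left A, E.dia.map_comp]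
    calc E.box.map (E.dia.map (E.εbox.app A))
        = 𝟙 (E.box.obj (E.dia.obj (E.box.obj A))) ≫ E.box.map (E.dia.map (E.εbox.app A)) :=
          (Category.id_comp _).symm
      _ = E.εbox.app (E.dia.obj (E.box.obj A)) ≫ E.dia.map (E.δbb.app A) ≫
            (E.χ.app (E.box.obj A) ≫ E.box.map (E.dia.map (E.εbox.app A))) := by
          rw [← h1 A]; exact (by simp only [Category.assoc])
      _ = E.εbox.app (E.dia.obj (E.box.obj A)) ≫
            (E.dia.map (E.δbb.app A) ≫ E.dia.map (E.box.map (E.εbox.app A))) ≫ E.χ.app A := by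
          rw [← n2]; exact (by simp only [Category.assoc])
      _ = _ := by rw [e]; exact congrArg _ (Category.id_comp _)
  rw [k1, k2]
  exact (Category.assoc _ _ _).symm
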